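/- Let (σ, u) be the solution of the mixed variational formulation of the interface problem and (σ_h, u_h) ∈ Σ_k × D_k its mixed finite element approximation. Then the robust best approximation estimate ‖α^{-1/2}(σ − σ_h)‖_{0,Ω} ≤ inf_{τ_h^f ∈ Σ_k^f} ‖α^{-1/2}(σ − τ_h^f)‖_{0,Ω} holds, where the infimum is over the discrete equilibrated space Σ_k^f, and the bound involves no constant depending on the diffusion coefficient α or the mesh. -/

import Mathlib

/-!
STATEMENT 0 (Theorem 3.2: robust best approximation of the flux in the discrete
equilibrated space).

Abstract model of the mixed FEM setting for the interface problem
`-∇·(α ∇u) = f` in `Ω`, `u = 0` on `∂Ω`, `σ = -α∇u`: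

* `V` models the flux space `H(div;Ω)` endowed with the `α⁻¹`-weighted `L²(Ω)`
  inner product, so that `‖τ‖ = ‖α^{-1/2} τ‖_{0,Ω}` and `⟪σ, τ⟫ = (α⁻¹ σ, τ)`;
  this builds the (piecewise constant, positive) diffusion coefficient `α` into
  the geometry of `V`, and the conclusion below holds with constant `1`:
  no constant depending on `α` or on the mesh appears.
* `W` models `L²(Ω)` with its usual inner product, `dv` the divergence `∇·`.
* `Sk` models the discrete space `Σ_k` (Raviart–Thomas `RT_k` or
  Brezzi–Douglas–Marini `BDM_{k+1}` on a regular triangulation `T` of `Ω` not cut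
  by the interfaces), `Dk` models the discontinuous piecewise polynomial space
  `D_k`, and `Qf` models the `L²`-projection `Q_h^k f` of `f ∈ L²(Ω)` onto `D_k`.
* `(σ, u)` solves the mixed variational formulation and `(σ_h, u_h) ∈ Σ_k × D_k`
  is its mixed finite element approximation.
* The discrete equilibrated space is `Σ_k^f = {τ_h ∈ Σ_k : ∇·τ_h = Q_h^k f}`,
  modeled as the subtype `{τ : V // τ ∈ Sk ∧ dv τ = Qf}`.
-/

open scoped RealInnerProductSpace

/-!
Two elements of `Σ_k^f` differ by a discrete field with zero divergence. Testing both constitutive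
equations with such a field eliminates `u` and `u_h`, so `σ - σ_h` is orthogonal to every
`σ_h - τ_h^f`. As `σ_h` itself lies in `Σ_k^f`, Pythagoras shows that it is the point of `Σ_k^f`
closest to `σ`.
-/

/-- The discrete equilibrated space `Σ_k^f` of fluxes in `S` with divergence `g`, where `g` is the
projected datum `Q_h^k f`. It is only a set, being affine rather than linear for `g ≠ 0`. -/
def discreteEquilibratedSpace {R V W : Type*} [Semiring R] [AddCommMonoid V] [AddCommMonoid W]
    [Module R V] [Module R W] (S : Submodule R V) (dv : V →ₗ[R] W) (g : W) : Set V :=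
  {τ | τ ∈ S ∧ dv τ = g}

section BestApproximation

open scoped InnerProductSpace

variable {𝕜 E : Type*} [RCLike 𝕜] [SeminormedAddCommGroup E] [InnerProductSpace 𝕜 E]

theorem norm_le_norm_add_of_inner_eq_zero {x y : E} (h : ⟪x, y⟫_𝕜 = 0) : ‖x‖ ≤ ‖x + y‖ := by
  refine (mul_self_le_mul_self_iff (norm_nonneg _) (norm_nonneg _)).mpr ?_
  rw [norm_add_sq_eq_norm_sq_add_norm_sq_of_inner_eq_zero x y h]
  exact le_add_of_nonneg_right (mul_self_nonneg _)

theorem isMinOn_norm_sub_of_forall_inner_eq_zero {s : Set E} {x y : E}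
    (h : ∀ z ∈ s, ⟪x - y, y - z⟫_𝕜 = 0) : IsMinOn (fun z ↦ ‖x - z‖) s y :=
  isMinOn_iff.mpr fun z hz ↦ by
    simpa only [sub_add_sub_cancel] using norm_le_norm_add_of_inner_eq_zero (h z hz)

end BestApproximation

section DiscreteEquilibrium

open scoped InnerProductSpace

variable {𝕜 W : Type*} [RCLike 𝕜] [NormedAddCommGroup W] [InnerProductSpace 𝕜 W]

theorem eq_of_mem_of_forall_inner_eq {D : Submodule 𝕜 W} {x y : W} (hx : x ∈ D) (hy : y ∈ D)
    (h : ∀ v ∈ D, ⟪x, v⟫_𝕜 = ⟪y, v⟫_𝕜) : x = y :=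
  congrArg Subtype.val <|
    ext_inner_right 𝕜 (x := (⟨x, hx⟩ : D)) (y := ⟨y, hy⟩) fun v ↦ h v v.property

theorem mem_discreteEquilibratedSpace {V : Type*} [AddCommMonoid V] [Module 𝕜 V]
    {S : Submodule 𝕜 V} {D : Submodule 𝕜 W} {dv : V →ₗ[𝕜] W} (hdv : ∀ τ ∈ S, dv τ ∈ D)
    {f g : W} (hg : g ∈ D) (hfg : ∀ v ∈ D, ⟪f - g, v⟫_𝕜 = 0)
    {σh : V} (hσh : σh ∈ S) (hequil : ∀ v ∈ D, ⟪dv σh, v⟫_𝕜 = ⟪f, v⟫_𝕜) :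
    σh ∈ discreteEquilibratedSpace S dv g := by
  refine ⟨hσh, eq_of_mem_of_forall_inner_eq (hdv σh hσh) hg fun v hv ↦ ?_⟩
  rw [hequil v hv, ← sub_eq_zero, ← inner_sub_left, hfg v hv]

end DiscreteEquilibrium

section MixedApproximation

open scoped InnerProductSpace

variable {𝕜 V W : Type*} [RCLike 𝕜] [SeminormedAddCommGroup V] [InnerProductSpace 𝕜 V]

theorem inner_sub_eq_zero_of_constitutive [SeminormedAddCommGroup W] [InnerProductSpace 𝕜 W]
    {S : Submodule 𝕜 V} {dv : V →ₗ[𝕜] W} {σ σh : V} {u uh : W}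
    (hσ : ∀ τ ∈ S, ⟪σ, τ⟫_𝕜 - ⟪u, dv τ⟫_𝕜 = 0) (hσh : ∀ τ ∈ S, ⟪σh, τ⟫_𝕜 - ⟪uh, dv τ⟫_𝕜 = 0)
    {τ : V} (hτ : τ ∈ S) (hdvτ : dv τ = 0) : ⟪σ - σh, τ⟫_𝕜 = 0 := by
  have inner_eq_zero {ρ : V} {w : W} (hρ : ∀ τ ∈ S, ⟪ρ, τ⟫_𝕜 - ⟪w, dv τ⟫_𝕜 = 0) :
      ⟪ρ, τ⟫_𝕜 = 0 := by
    simpa only [hdvτ, inner_zero_right, sub_zero] using hρ τ hτ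
  rw [inner_sub_left, inner_eq_zero hσ, inner_eq_zero hσh, sub_zero]

variable [NormedAddCommGroup W] [InnerProductSpace 𝕜 W]

-- Over `ℂ`, the product `⟪u, dv τ⟫` must be linear in `τ`, as `⟪σ, τ⟫` is; hence its order.
theorem robust_best_approximation_in_discrete_equilibrated_space_general
    (S : Submodule 𝕜 V) (D : Submodule 𝕜 W) (dv : V →ₗ[𝕜] W) (hdv : ∀ τ ∈ S, dv τ ∈ D)
    (f g : W) (hg : g ∈ D) (hfg : ∀ v ∈ D, ⟪f - g, v⟫_𝕜 = 0)
    (σ : V) (u : W) (hσ : ∀ τ ∈ S, ⟪σ, τ⟫_𝕜 - ⟪u, dv τ⟫_𝕜 = 0)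
    (σh : V) (uh : W) (hσh_mem : σh ∈ S) (hσh : ∀ τ ∈ S, ⟪σh, τ⟫_𝕜 - ⟪uh, dv τ⟫_𝕜 = 0)
    (hequil : ∀ v ∈ D, ⟪dv σh, v⟫_𝕜 = ⟪f, v⟫_𝕜) :
    ‖σ - σh‖ = ⨅ τ : discreteEquilibratedSpace S dv g, ‖σ - τ‖ := by
  have hmem : σh ∈ discreteEquilibratedSpace S dv g :=
    mem_discreteEquilibratedSpace hdv hg hfg hσh_mem hequil
  have hmin : IsMinOn (fun τ ↦ ‖σ - τ‖) (discreteEquilibratedSpace S dv g) σh := by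
    refine isMinOn_norm_sub_of_forall_inner_eq_zero (𝕜 := 𝕜) fun τ hτ ↦ ?_
    have hdiv : dv (σh - τ) = 0 := by rw [map_sub, hmem.2, hτ.2, sub_self]
    exact inner_sub_eq_zero_of_constitutive hσ hσh (S.sub_mem hσh_mem hτ.1) hdiv
  exact (hmin.iInf_eq hmem).symm

end MixedApproximation

theorem robust_best_approximation_in_discrete_equilibrated_space
    {V W : Type*} [NormedAddCommGroup V] [InnerProductSpace ℝ V]
    [NormedAddCommGroup W] [InnerProductSpace ℝ W]
    -- discrete spaces Σ_k and D_k; the divergence maps Σ_k into D_k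
    (Sk : Submodule ℝ V) (Dk : Submodule ℝ W)
    (dv : V →ₗ[ℝ] W)
    (hdv : ∀ τ ∈ Sk, dv τ ∈ Dk)
    -- the datum f and its L²-projection Q_h^k f onto D_k
    (f Qf : W) (hQf_mem : Qf ∈ Dk) (hQf_proj : ∀ v ∈ Dk, ⟪f - Qf, v⟫ = 0)
    -- exact solution (σ, u) of the mixed formulation
    (σ : V) (u : W)
    (hmixed₁ : ∀ τ : V, ⟪σ, τ⟫ - ⟪dv τ, u⟫ = 0)
    (hmixed₂ : ∀ v : W, ⟪dv σ, v⟫ = ⟪f, v⟫)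
    -- mixed finite element approximation (σ_h, u_h) ∈ Σ_k × D_k
    (σh : V) (uh : W) (hσh : σh ∈ Sk) (huh : uh ∈ Dk)
    (hdisc₁ : ∀ τh ∈ Sk, ⟪σh, τh⟫ - ⟪dv τh, uh⟫ = 0)
    (hdisc₂ : ∀ vh ∈ Dk, ⟪dv σh, vh⟫ = ⟪f, vh⟫) :
    -- ‖α^{-1/2}(σ - σ_h)‖_{0,Ω} ≤ inf_{τ_h^f ∈ Σ_k^f} ‖α^{-1/2}(σ - τ_h^f)‖_{0,Ω}
    ‖σ - σh‖ ≤ ⨅ τf : {τ : V // τ ∈ Sk ∧ dv τ = Qf}, ‖σ - (τf : V)‖ := by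
  simp only [real_inner_comm u, real_inner_comm uh] at hmixed₁ hdisc₁
  exact (robust_best_approximation_in_discrete_equilibrated_space_general Sk Dk dv hdv f Qf hQf_mem
    hQf_proj σ u (fun τ _ ↦ hmixed₁ τ) σh uh hσh hdisc₁ hdisc₂).le
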